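/- Let K be a regular kernel with constants b, ρ, κ₀ that moreover satisfies the tail bound K(z) ≤ C_K·exp(−‖z‖^α) for all z ∈ ℝ^M with ‖z‖ ≥ R_K, for some constants α, R_K, C_K > 0. Assume |Y| ≤ R almost surely and ‖r(x)‖ ≤ R for all x ∈ ℝ^d, for some constant R > 0, and assume there exist L ≥ 0 and an L-Lipschitz function G : ℝ^M → ℝ such that G(r(X)) is a version of E[Y | r(X)]. Then, choosing the bandwidth h = ℓ^{−1/(M+2)}, there exists a constant C > 0 independent of ℓ such that E[|g_n(r(X)) − G(r(X))|²] ≤ C·ℓ^{−2/(M+2)} for every ℓ ≥ 1, where the expectation is over both X and the sample (X_i,Y_i)_{i=1}^ℓ. -/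

import Mathlib

open MeasureTheory Filter

/-- A kernel `K : ℝ^M → ℝ` is *regular* with constants `b, ρ > 0` and `κ₀ < ∞` if
`b·1_{‖z‖<ρ} ≤ K(z) ≤ 1` for every `z` and
`∫_{ℝ^M} sup_{u ∈ B(z,ρ)} K(u) dz = κ₀ < ∞`. -/
structure IsRegularKernel {M : ℕ} (K : EuclideanSpace ℝ (Fin M) → ℝ)
    (b ρ κ₀ : ℝ) : Prop where
  b_pos : 0 < b
  rho_pos : 0 < ρ
  measurable : Measurable K
  nonneg : ∀ z, 0 ≤ K z
  lower : ∀ z, ‖z‖ < ρ → b ≤ K z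
  le_one : ∀ z, K z ≤ 1
  lintegral_sup : ∫⁻ z, (⨆ u ∈ Metric.ball z ρ, ENNReal.ofReal (K u))
      = ENNReal.ofReal κ₀

/-- The weight `W_{n,i}(x) = K_h(r(x) − r(X_i)) / ∑_j K_h(r(x) − r(X_j))`
(with `K_h(z) = K(z/h)` and the convention `0/0 = 0`), where the sample points are
`X (ωs j)`, `j = 1,…,ℓ`. -/
noncomputable def kernelWeight {Ω : Type*} {d M : ℕ}
    (K : EuclideanSpace ℝ (Fin M) → ℝ) (h : ℝ)
    (r : (Fin d → ℝ) → EuclideanSpace ℝ (Fin M))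
    (X : Ω → Fin d → ℝ) {ℓ : ℕ} (ωs : Fin ℓ → Ω) (x : Fin d → ℝ) (i : Fin ℓ) : ℝ :=
  K (h⁻¹ • (r x - r (X (ωs i)))) / ∑ j, K (h⁻¹ • (r x - r (X (ωs j))))

/-- The kernel-based consensual aggregation estimator
`g_n(r(x)) = ∑_{i=1}^ℓ W_{n,i}(x)·Y_i`. -/
noncomputable def aggEstimator {Ω : Type*} {d M : ℕ}
    (K : EuclideanSpace ℝ (Fin M) → ℝ) (h : ℝ)
    (r : (Fin d → ℝ) → EuclideanSpace ℝ (Fin M))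
    (X : Ω → Fin d → ℝ) (Y : Ω → ℝ) {ℓ : ℕ} (ωs : Fin ℓ → Ω) (x : Fin d → ℝ) : ℝ :=
  ∑ i, kernelWeight K h r X ωs x i * Y (ωs i)

/-! Given `X`, the error splits into a centred noise term, whose second moment is at most
`4 R² ∑ Wᵢ²`, and a bias term, which convexity bounds by `∑ Wᵢ (G(r(Xᵢ)) - G(r(X)))²` unless all
weights vanish. If `N` sample points have predictions in `ball (r(X)) (ρ h)`, the kernel sum is at
least `b N`, so both terms are controlled by `1 / (1 + N)` (trivially for `N = 0`), whose mean is at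
most `1 / (ℓ p)` for `p` the probability of that ball. With `ν` the law of `r(X)`, averaging over
the centres of balls of half the radius gives `∫ 1 / ν (ball z (ρ h)) dν(z) = O(h ^ (-M))`, which
makes the variance `O(1 / (ℓ h ^ M))`; the same averaging, applied to the kernel times the squared
distance, makes the bias of a Lipschitz `G` equal to `O(h²)` up to a variance-sized term. -/

open scoped ENNReal NNReal Finset

section NormalizedWeights

variable {ι : Type*} [Fintype ι] {k : ι → ℝ} {b : ℝ} {s : Finset ι}

lemma sum_div_sum_le_one (k : ι → ℝ) : ∑ i, k i / ∑ j, k j ≤ 1 := by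
  rw [← Finset.sum_div]
  exact div_self_le_one _

lemma inv_sum_le_of_le_on (hb : 0 < b) (hk : ∀ i, 0 ≤ k i) (hbk : ∀ i ∈ s, b ≤ k i)
    (hs : s.Nonempty) : (∑ i, k i)⁻¹ ≤ 2 / b * (1 + (#s : ℝ))⁻¹ := by
  have one_le_card : (1 : ℝ) ≤ #s := by exact_mod_cast hs.card_pos
  have card_mul_le : #s * b ≤ ∑ i, k i := by
    rw [← nsmul_eq_mul]
    exact (s.card_nsmul_le_sum k b hbk).trans (Finset.sum_le_univ_sum_of_nonneg hk)
  calc (∑ i, k i)⁻¹ ≤ (b * (1 + (#s : ℝ)) / 2)⁻¹ := by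
        gcongr
        nlinarith
    _ = 2 / b * (1 + (#s : ℝ))⁻¹ := by field_simp

lemma sum_sq_div_sum_le (hb : 0 < b) (hk : ∀ i, 0 ≤ k i) (hk1 : ∀ i, k i ≤ 1)
    (hbk : ∀ i ∈ s, b ≤ k i) :
    ∑ i, (k i / ∑ j, k j) ^ 2 ≤ (1 + 2 / b) * (1 + (#s : ℝ))⁻¹ := by
  have sum_nonneg : 0 ≤ ∑ j, k j := Finset.sum_nonneg fun i _ => hk i
  have weight_nonneg (i : ι) : 0 ≤ k i / ∑ j, k j := div_nonneg (hk i) sum_nonneg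
  have sum_sq_le {c : ℝ} (hc : 0 ≤ c) (h : ∀ i, k i / ∑ j, k j ≤ c) :
      ∑ i, (k i / ∑ j, k j) ^ 2 ≤ c := by
    calc ∑ i, (k i / ∑ j, k j) ^ 2 ≤ ∑ i, c * (k i / ∑ j, k j) := by
          gcongr with i
          rw [sq]
          exact mul_le_mul_of_nonneg_right (h i) (weight_nonneg i)
      _ = c * ∑ i, k i / ∑ j, k j := (Finset.mul_sum ..).symm
      _ ≤ c := mul_le_of_le_one_right hc (sum_div_sum_le_one k)
  rcases s.eq_empty_or_nonempty with rfl | hs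
  · have weight_le_one (i : ι) : k i / ∑ j, k j ≤ 1 :=
      div_le_one_of_le₀ (Finset.single_le_sum (fun j _ => hk j) (Finset.mem_univ i)) sum_nonneg
    simpa using (sum_sq_le zero_le_one weight_le_one).trans
      (le_add_of_nonneg_right (by positivity : 0 ≤ 2 / b))
  · have weight_le (i : ι) : k i / ∑ j, k j ≤ (∑ j, k j)⁻¹ := by
      rw [div_eq_mul_inv]
      exact mul_le_of_le_one_left (inv_nonneg.2 sum_nonneg) (hk1 i)
    calc ∑ i, (k i / ∑ j, k j) ^ 2 ≤ (∑ j, k j)⁻¹ := sum_sq_le (inv_nonneg.2 sum_nonneg) weight_le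
      _ ≤ 2 / b * (1 + (#s : ℝ))⁻¹ := inv_sum_le_of_le_on hb hk hbk hs
      _ ≤ (1 + 2 / b) * (1 + (#s : ℝ))⁻¹ := by
          gcongr
          linarith

lemma abs_sum_div_sum_mul_le (hk : ∀ i, 0 ≤ k i) {y : ι → ℝ} {B : ℝ} (hB : 0 ≤ B)
    (hy : ∀ i, |y i| ≤ B) : |∑ i, (k i / ∑ j, k j) * y i| ≤ B := by
  have weight_nonneg (i : ι) : 0 ≤ k i / ∑ j, k j :=
    div_nonneg (hk i) (Finset.sum_nonneg fun j _ => hk j)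
  calc |∑ i, (k i / ∑ j, k j) * y i| ≤ ∑ i, |(k i / ∑ j, k j) * y i| :=
        Finset.abs_sum_le_sum_abs _ _
    _ ≤ ∑ i, (k i / ∑ j, k j) * B := by
        gcongr with i
        rw [abs_mul, abs_of_nonneg (weight_nonneg i)]
        exact mul_le_mul_of_nonneg_left (hy i) (weight_nonneg i)
    _ = (∑ i, k i / ∑ j, k j) * B := (Finset.sum_mul ..).symm
    _ ≤ B := mul_le_of_le_one_left hB (sum_div_sum_le_one k)

lemma sq_sum_div_sum_mul_sub_le_sum (hk : ∀ i, 0 ≤ k i) (hsum : 0 < ∑ j, k j) (y : ι → ℝ) (g : ℝ) :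
    (∑ i, (k i / ∑ j, k j) * y i - g) ^ 2 ≤ (∑ j, k j)⁻¹ * ∑ i, k i * (y i - g) ^ 2 := by
  have sum_weights : ∑ i, k i / ∑ j, k j = 1 := by rw [← Finset.sum_div, div_self hsum.ne']
  calc (∑ i, (k i / ∑ j, k j) * y i - g) ^ 2 = (∑ i, (k i / ∑ j, k j) * (y i - g)) ^ 2 := by
        simp only [mul_sub, Finset.sum_sub_distrib, ← Finset.sum_mul, sum_weights, one_mul]
    _ ≤ ∑ i, (k i / ∑ j, k j) * (y i - g) ^ 2 := by
        simpa only [smul_eq_mul] using (Even.convexOn_pow (𝕜 := ℝ) even_two).map_sum_le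
          (fun i _ => div_nonneg (hk i) hsum.le) sum_weights
          (fun i _ => Set.mem_univ (y i - g))
    _ = (∑ j, k j)⁻¹ * ∑ i, k i * (y i - g) ^ 2 := by
        rw [Finset.mul_sum]
        exact Finset.sum_congr rfl fun i _ => by ring

lemma sq_sum_div_sum_mul_sub_le (hb : 0 < b) (hk : ∀ i, 0 ≤ k i) (hbk : ∀ i ∈ s, b ≤ k i)
    {y : ι → ℝ} {g B : ℝ} (hy : ∀ i, |y i| ≤ B) (hg : |g| ≤ B) :
    (∑ i, (k i / ∑ j, k j) * y i - g) ^ 2 ≤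
      (4 * B ^ 2 + 2 / b * ∑ i, k i * (y i - g) ^ 2) * (1 + (#s : ℝ))⁻¹ := by
  have hB : 0 ≤ B := (abs_nonneg g).trans hg
  have sum_nonneg : 0 ≤ ∑ i, k i * (y i - g) ^ 2 :=
    Finset.sum_nonneg fun i _ => mul_nonneg (hk i) (sq_nonneg _)
  rcases s.eq_empty_or_nonempty with rfl | hs
  · have dist_le : |∑ i, (k i / ∑ j, k j) * y i - g| ≤ 2 * B := by
      linarith [abs_sub (∑ i, (k i / ∑ j, k j) * y i) g, abs_sum_div_sum_mul_le hk hB hy]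
    calc (∑ i, (k i / ∑ j, k j) * y i - g) ^ 2 ≤ (2 * B) ^ 2 :=
          sq_le_sq.2 (dist_le.trans (le_abs_self _))
      _ = 4 * B ^ 2 := by ring
      _ ≤ _ := by simpa using (by positivity : 0 ≤ 2 / b * ∑ i, k i * (y i - g) ^ 2)
  · obtain ⟨i, hi⟩ := hs
    have sum_pos : 0 < ∑ j, k j :=
      (hb.trans_le (hbk i hi)).trans_le (Finset.single_le_sum (fun j _ => hk j) (Finset.mem_univ i))
    calc (∑ i, (k i / ∑ j, k j) * y i - g) ^ 2
        ≤ (∑ j, k j)⁻¹ * ∑ i, k i * (y i - g) ^ 2 := sq_sum_div_sum_mul_sub_le_sum hk sum_pos y g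
      _ ≤ 2 / b * (1 + (#s : ℝ))⁻¹ * ∑ i, k i * (y i - g) ^ 2 := by
          gcongr
          exact inv_sum_le_of_le_on hb hk hbk ⟨i, hi⟩
      _ = (2 / b * ∑ i, k i * (y i - g) ^ 2) * (1 + (#s : ℝ))⁻¹ := by ring
      _ ≤ _ := by
          gcongr
          exact le_add_of_nonneg_left (by positivity)

end NormalizedWeights

lemma ofReal_inv_one_add_natCast (n : ℕ) :
    ENNReal.ofReal (1 + (n : ℝ))⁻¹ = (1 + (n : ℝ≥0∞))⁻¹ := by
  rw [ENNReal.ofReal_inv_of_pos (by positivity), ENNReal.ofReal_add zero_le_one n.cast_nonneg,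
    ENNReal.ofReal_one, ENNReal.ofReal_natCast]

section HitCount

open Classical in
/-- Number of members of the finite sample `ω` that fall into `A`. -/
noncomputable def hitCount {ι Ω : Type*} [Fintype ι] (A : Set Ω) (ω : ι → Ω) : ℕ :=
  #{i | ω i ∈ A}

variable {Ω : Type*} {A : Set Ω}

lemma hitCount_eq_sum {ι : Type*} [Fintype ι] (A : Set Ω) (ω : ι → Ω) :
    hitCount A ω = ∑ i, A.indicator 1 (ω i) := by
  classical
  simp only [hitCount, Finset.card_filter, Set.indicator_apply, Pi.one_apply]

lemma hitCount_removeNth_le {n : ℕ} (i : Fin (n + 1)) (ω : Fin (n + 1) → Ω) :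
    hitCount A (i.removeNth ω) ≤ hitCount A ω := by
  simp only [hitCount_eq_sum, Fin.sum_univ_succAbove _ i]
  exact Nat.le_add_left _ _

lemma hitCount_of_mem {n : ℕ} {i : Fin (n + 1)} {ω : Fin (n + 1) → Ω} (hi : ω i ∈ A) :
    hitCount A ω = 1 + hitCount A (i.removeNth ω) := by
  simp only [hitCount_eq_sum, Fin.sum_univ_succAbove _ i,
    Set.indicator_of_mem hi, Pi.one_apply, Fin.removeNth]

variable [MeasurableSpace Ω]

lemma measurable_hitCount {ι : Type*} [Fintype ι] (hA : MeasurableSet A) :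
    Measurable (hitCount A : (ι → Ω) → ℕ) := by
  have : Measurable (A.indicator (1 : Ω → ℕ)) := measurable_one.indicator hA
  rw [funext (hitCount_eq_sum A)]
  fun_prop

lemma measurable_inv_one_add_hitCount {ι : Type*} [Fintype ι] (hA : MeasurableSet A) :
    Measurable fun ω : ι → Ω => (1 + (hitCount A ω : ℝ≥0∞))⁻¹ :=
  ((measurable_from_top.comp (measurable_hitCount hA)).const_add 1).inv

lemma lintegral_pi_mul_removeNth {μ : Measure Ω} [SigmaFinite μ] {n : ℕ} (i : Fin (n + 1))
    {f : Ω → ℝ≥0∞} (hf : AEMeasurable f μ) {g : (Fin n → Ω) → ℝ≥0∞}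
    (hg : AEMeasurable g (Measure.pi fun _ => μ)) :
    ∫⁻ ω, f (ω i) * g (i.removeNth ω) ∂(Measure.pi fun _ => μ)
      = (∫⁻ a, f a ∂μ) * ∫⁻ ω, g ω ∂(Measure.pi fun _ => μ) :=
  ((measurePreserving_piFinSuccAbove (fun _ : Fin (n + 1) => μ) i).lintegral_comp_emb
    (MeasurableEquiv.measurableEmbedding _) fun q => f q.1 * g q.2).trans
    (lintegral_prod_mul hf hg)

/- Summing the exchangeable terms `1_A(ω i) / (1 + hitCount A (i.removeNth ω))` over a sample of
size `n + 1` gives `hitCount A ω / hitCount A ω ≤ 1`. -/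
lemma lintegral_inv_one_add_hitCount_le (μ : Measure Ω) [IsProbabilityMeasure μ]
    (hA : MeasurableSet A) (n : ℕ) :
    ∫⁻ ω, (1 + (hitCount A ω : ℝ≥0∞))⁻¹ ∂(Measure.pi fun _ : Fin n => μ)
      ≤ ((n + 1 : ℝ≥0∞) * μ A)⁻¹ := by
  have hind : Measurable (A.indicator (1 : Ω → ℝ≥0∞)) := measurable_one.indicator hA
  have sum_le_one (ω : Fin (n + 1) → Ω) :
      ∑ i, A.indicator (1 : Ω → ℝ≥0∞) (ω i) * (1 + (hitCount A (i.removeNth ω) : ℝ≥0∞))⁻¹ ≤ 1 := by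
    have term_eq (i : Fin (n + 1)) :
        A.indicator (1 : Ω → ℝ≥0∞) (ω i) * (1 + (hitCount A (i.removeNth ω) : ℝ≥0∞))⁻¹
          = A.indicator (1 : Ω → ℝ≥0∞) (ω i) * (hitCount A ω : ℝ≥0∞)⁻¹ := by
      by_cases hi : ω i ∈ A
      · rw [hitCount_of_mem hi, Nat.cast_add, Nat.cast_one]
      · simp only [Set.indicator_of_notMem hi, zero_mul]
    have cast_hitCount : (hitCount A ω : ℝ≥0∞) = ∑ i, A.indicator 1 (ω i) := by
      classical
      simp only [hitCount, Finset.natCast_card_filter, Set.indicator_apply, Pi.one_apply]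
    simp only [term_eq, ← Finset.sum_mul, ← cast_hitCount]
    exact ENNReal.mul_inv_le_one _
  rw [ENNReal.le_inv_iff_mul_le]
  calc (∫⁻ ω, (1 + (hitCount A ω : ℝ≥0∞))⁻¹ ∂(Measure.pi fun _ : Fin n => μ)) * ((n + 1) * μ A)
      = ∑ _i : Fin (n + 1),
          μ A * ∫⁻ ω, (1 + (hitCount A ω : ℝ≥0∞))⁻¹ ∂(Measure.pi fun _ : Fin n => μ) := by
        rw [Finset.sum_const, Finset.card_univ, Fintype.card_fin, nsmul_eq_mul]
        push_cast
        ring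
    _ = ∑ i, ∫⁻ ω, A.indicator (1 : Ω → ℝ≥0∞) (ω i)
          * (1 + (hitCount A (i.removeNth ω) : ℝ≥0∞))⁻¹ ∂(Measure.pi fun _ : Fin (n + 1) => μ) := by
        simp only [lintegral_pi_mul_removeNth _ hind.aemeasurable
          (measurable_inv_one_add_hitCount hA).aemeasurable, lintegral_indicator_one hA]
    _ = ∫⁻ ω, ∑ i, A.indicator (1 : Ω → ℝ≥0∞) (ω i)
          * (1 + (hitCount A (i.removeNth ω) : ℝ≥0∞))⁻¹ ∂(Measure.pi fun _ : Fin (n + 1) => μ) := by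
        refine (lintegral_finsetSum _ fun i _ => ?_).symm
        exact (hind.comp (measurable_pi_apply i)).mul
          ((measurable_inv_one_add_hitCount hA).comp (by unfold Fin.removeNth; fun_prop))
    _ ≤ ∫⁻ _, 1 ∂(Measure.pi fun _ : Fin (n + 1) => μ) := lintegral_mono sum_le_one
    _ = 1 := by rw [lintegral_one, measure_univ]

lemma lintegral_mul_inv_one_add_hitCount_le (μ : Measure Ω) [IsProbabilityMeasure μ]
    (hA : MeasurableSet A) {f : Ω → ℝ≥0∞} (hf : AEMeasurable f μ) {n : ℕ} (i : Fin (n + 1)) :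
    ∫⁻ ω, f (ω i) * (1 + (hitCount A ω : ℝ≥0∞))⁻¹ ∂(Measure.pi fun _ => μ)
      ≤ (∫⁻ a, f a ∂μ) * ((n + 1 : ℝ≥0∞) * μ A)⁻¹ := by
  calc ∫⁻ ω, f (ω i) * (1 + (hitCount A ω : ℝ≥0∞))⁻¹ ∂(Measure.pi fun _ => μ)
      ≤ ∫⁻ ω, f (ω i) * (1 + (hitCount A (i.removeNth ω) : ℝ≥0∞))⁻¹ ∂(Measure.pi fun _ => μ) := by
        gcongr with ω
        exact hitCount_removeNth_le i ω
    _ = (∫⁻ a, f a ∂μ) * ∫⁻ ω, (1 + (hitCount A ω : ℝ≥0∞))⁻¹ ∂(Measure.pi fun _ => μ) :=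
        lintegral_pi_mul_removeNth i hf (measurable_inv_one_add_hitCount hA).aemeasurable
    _ ≤ (∫⁻ a, f a ∂μ) * ((n + 1 : ℝ≥0∞) * μ A)⁻¹ := by
        gcongr
        exact lintegral_inv_one_add_hitCount_le μ hA n

lemma lintegral_sum_mul_inv_one_add_hitCount_le (μ : Measure Ω) [IsProbabilityMeasure μ]
    (hA : MeasurableSet A) {f : Ω → ℝ≥0∞} (hf : Measurable f) (n : ℕ) :
    ∫⁻ ω, (∑ i, f (ω i)) * (1 + (hitCount A ω : ℝ≥0∞))⁻¹ ∂(Measure.pi fun _ : Fin (n + 1) => μ)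
      ≤ (∫⁻ a, f a ∂μ) * (μ A)⁻¹ := by
  simp only [Finset.sum_mul]
  calc _ = ∑ i, ∫⁻ ω, f (ω i) * (1 + (hitCount A ω : ℝ≥0∞))⁻¹ ∂(Measure.pi fun _ => μ) :=
        lintegral_finsetSum _ fun i _ =>
          (hf.comp (measurable_pi_apply i)).mul (measurable_inv_one_add_hitCount hA)
    _ ≤ ∑ _i : Fin (n + 1), (∫⁻ a, f a ∂μ) * ((n + 1 : ℝ≥0∞) * μ A)⁻¹ :=
        Finset.sum_le_sum fun i _ => lintegral_mul_inv_one_add_hitCount_le μ hA hf.aemeasurable i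
    _ = ((n + 1 : ℝ≥0∞) * (n + 1 : ℝ≥0∞)⁻¹) * ((∫⁻ a, f a ∂μ) * (μ A)⁻¹) := by
        rw [Finset.sum_const, Finset.card_univ, Fintype.card_fin, nsmul_eq_mul,
          ENNReal.mul_inv (Or.inl (by simp)) (Or.inl (by finiteness))]
        push_cast
        ring
    _ ≤ (∫⁻ a, f a ∂μ) * (μ A)⁻¹ := mul_le_of_le_one_left zero_le (ENNReal.mul_inv_le_one _)

end HitCount

section Orthogonality

variable {Ω : Type*} [MeasurableSpace Ω] {μ : Measure Ω}

lemma integral_pi_eq_zero_of_integral_update_eq_zero [SigmaFinite μ] {n : ℕ} (i : Fin (n + 1))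
    {F : (Fin (n + 1) → Ω) → ℝ} (hF : ∀ ω, ∫ a, F (Function.update ω i a) ∂μ = 0) :
    ∫ ω, F ω ∂(Measure.pi fun _ => μ) = 0 := by
  by_cases hint : Integrable F (Measure.pi fun _ => μ)
  swap
  · exact integral_undef hint
  have hpres := (measurePreserving_piFinSuccAbove (fun _ : Fin (n + 1) => μ) i).symm
  have inner_eq_zero (w : Fin n → Ω) : ∫ a, F (i.insertNth a w) ∂μ = 0 := by
    rcases isEmpty_or_nonempty Ω with _ | ⟨⟨a₀⟩⟩
    · rw [Measure.eq_zero_of_isEmpty μ, integral_zero_measure]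
    · simpa only [Fin.update_insertNth] using hF (i.insertNth a₀ w)
  calc ∫ ω, F ω ∂(Measure.pi fun _ => μ)
      = ∫ q : Ω × (Fin n → Ω), F (i.insertNth q.1 q.2) ∂(μ.prod (Measure.pi fun _ => μ)) :=
        (hpres.integral_comp' F).symm
    _ = ∫ w, ∫ a, F (i.insertNth a w) ∂μ ∂(Measure.pi fun _ => μ) :=
        integral_prod_symm _ (hpres.integrable_comp_of_integrable hint)
    _ = 0 := by simp only [inner_eq_zero, integral_zero]

lemma integral_sq_sum_eq_integral_sum_sq {ι : Type*} [Fintype ι] {F : ι → Ω → ℝ}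
    (hF : ∀ i, MemLp (F i) 2 μ) (horth : Pairwise fun i j => ∫ ω, F i ω * F j ω ∂μ = 0) :
    ∫ ω, (∑ i, F i ω) ^ 2 ∂μ = ∫ ω, ∑ i, F i ω ^ 2 ∂μ := by
  have hint (i j : ι) : Integrable (fun ω => F i ω * F j ω) μ := (hF i).integrable_mul (hF j)
  simp only [sq, Finset.sum_mul_sum]
  rw [integral_finsetSum _ fun i _ => integrable_finsetSum _ fun j _ => hint i j,
    integral_finsetSum _ fun i _ => hint i i]
  refine Finset.sum_congr rfl fun i _ => ?_
  rw [integral_finsetSum _ fun j _ => hint i j]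
  exact Finset.sum_eq_single i (fun j _ hj => horth hj.symm) (by simp)

variable {E : Type*} [mE : MeasurableSpace E] {Z : Ω → E} {ε : Ω → ℝ}

lemma integral_comp_mul_eq_zero_of_condExp_eq_zero [IsFiniteMeasure μ] (hZ : Measurable Z)
    (hε : Integrable ε μ) (hεZ : μ[ε | mE.comap Z] =ᵐ[μ] 0) {f : E → ℝ} (hf : Measurable f) {C : ℝ}
    (hfC : ∀ x, |f x| ≤ C) : ∫ ω, f (Z ω) * ε ω ∂μ = 0 := by
  have condExp_mul : μ[(f ∘ Z) * ε | mE.comap Z] =ᵐ[μ] (f ∘ Z) * μ[ε | mE.comap Z] :=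
    condExp_stronglyMeasurable_mul_of_bound hZ.comap_le
      (hf.comp (comap_measurable Z)).stronglyMeasurable hε C (ae_of_all _ fun ω => hfC (Z ω))
  calc ∫ ω, f (Z ω) * ε ω ∂μ = ∫ ω, (μ[(f ∘ Z) * ε | mE.comap Z]) ω ∂μ :=
        (integral_condExp hZ.comap_le).symm
    _ = 0 := integral_eq_zero_of_ae (condExp_mul.trans (hεZ.mono fun ω hω => by
        simp only [Pi.mul_apply, hω, Pi.zero_apply, mul_zero]))

/- The noise `ε (ω i)` stays centred after conditioning on all the `Z (ω j)`, so the cross terms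
of the square vanish. -/
lemma integral_mul_noise_mul_noise_eq_zero [IsProbabilityMeasure μ] (hZ : Measurable Z)
    (hε : Integrable ε μ) (hεZ : μ[ε | mE.comap Z] =ᵐ[μ] 0) {n : ℕ} {i j : Fin (n + 1)}
    (hij : i ≠ j) {q : (Fin (n + 1) → E) → ℝ} (hq : Measurable q) {C : ℝ} (hqC : ∀ x, |q x| ≤ C) :
    ∫ ω, q (Z ∘ ω) * (ε (ω i) * ε (ω j)) ∂(Measure.pi fun _ => μ) = 0 := by
  refine integral_pi_eq_zero_of_integral_update_eq_zero i fun ω => ?_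
  have h := integral_comp_mul_eq_zero_of_condExp_eq_zero hZ hε hεZ
    (f := fun x => q (Function.update (Z ∘ ω) i x)) (hq.comp (measurable_update _))
    (fun x => hqC _)
  simp only [Function.comp_update, Function.update_self, Function.update_of_ne hij.symm,
    ← mul_assoc, integral_mul_const, h, zero_mul]

lemma lintegral_sq_sum_mul_noise_le [IsProbabilityMeasure μ] (hZ : Measurable Z)
    (hε : Measurable ε) {D : ℝ} (hD : ∀ᵐ ω ∂μ, |ε ω| ≤ D) (hεZ : μ[ε | mE.comap Z] =ᵐ[μ] 0)
    {n : ℕ} {q : Fin (n + 1) → (Fin (n + 1) → E) → ℝ} (hq : ∀ i, Measurable (q i))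
    {C : ℝ} (hqC : ∀ i x, |q i x| ≤ C) :
    ∫⁻ ω, ENNReal.ofReal ((∑ i, q i (Z ∘ ω) * ε (ω i)) ^ 2) ∂(Measure.pi fun _ => μ)
      ≤ ∫⁻ ω, ENNReal.ofReal (D ^ 2 * ∑ i, q i (Z ∘ ω) ^ 2) ∂(Measure.pi fun _ => μ) := by
  have abs_noise_le : ∀ᵐ ω ∂(Measure.pi fun _ : Fin (n + 1) => μ), ∀ i, |ε (ω i)| ≤ D :=
    ae_all_iff.2 fun i => (Measure.tendsto_eval_ae_ae (μ := fun _ => μ)).eventually hD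
  have hint : Integrable ε μ := .of_bound hε.aestronglyMeasurable D hD
  have hmem (i : Fin (n + 1)) :
      MemLp (fun ω => q i (Z ∘ ω) * ε (ω i)) 2 (Measure.pi fun _ => μ) := by
    refine .of_bound (by fun_prop) (C * D) (abs_noise_le.mono fun ω hω => ?_)
    rw [Real.norm_eq_abs, abs_mul]
    exact mul_le_mul (hqC i _) (hω i) (abs_nonneg _) ((abs_nonneg _).trans (hqC i (Z ∘ ω)))
  have horth : Pairwise fun i j => ∫ ω, (q i (Z ∘ ω) * ε (ω i)) * (q j (Z ∘ ω) * ε (ω j))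
      ∂(Measure.pi fun _ => μ) = 0 := fun i j hij =>
    (integral_congr_ae (ae_of_all _ fun ω => mul_mul_mul_comm ..)).trans <|
      integral_mul_noise_mul_noise_eq_zero hZ hint hεZ hij ((hq i).mul (hq j)) (C := C * C)
        fun x => (abs_mul _ _).trans_le
          (mul_le_mul (hqC i x) (hqC j x) (abs_nonneg _) ((abs_nonneg _).trans (hqC i x)))
  rw [← ofReal_integral_eq_lintegral_ofReal (memLp_finsetSum _ fun i _ => hmem i).integrable_sq
      (ae_of_all _ fun ω => sq_nonneg _), integral_sq_sum_eq_integral_sum_sq hmem horth,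
    ofReal_integral_eq_lintegral_ofReal (integrable_finsetSum _ fun i _ => (hmem i).integrable_sq)
      (ae_of_all _ fun ω => Finset.sum_nonneg fun i _ => sq_nonneg _)]
  refine lintegral_mono_ae (abs_noise_le.mono fun ω hω => ENNReal.ofReal_le_ofReal ?_)
  rw [Finset.mul_sum]
  gcongr with i
  rw [mul_pow, mul_comm]
  exact mul_le_mul_of_nonneg_right (sq_le_sq.2 ((hω i).trans (le_abs_self D))) (sq_nonneg _)

lemma condExp_sub_eq_zero_of_eq_condExp {Ω : Type*} {m m₀ : MeasurableSpace Ω} {μ : Measure Ω}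
    (hm : m ≤ m₀) [SigmaFinite (μ.trim hm)] {f g : Ω → ℝ} (hf : Integrable f μ)
    (hg : g =ᵐ[μ] μ[f | m]) : μ[f - g | m] =ᵐ[μ] 0 := by
  filter_upwards [condExp_sub hf (integrable_condExp.congr hg.symm) m, condExp_congr_ae (m := m) hg,
    condExp_condExp_of_le (f := f) le_rfl hm] with ω h_sub h_congr h_tower
  rw [h_sub, Pi.sub_apply, h_congr, h_tower, sub_self, Pi.zero_apply]

lemma ae_abs_le_of_eq_condExp {Ω : Type*} {m m₀ : MeasurableSpace Ω} {μ : Measure Ω} {f g : Ω → ℝ}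
    {R : ℝ} (hf : ∀ᵐ ω ∂μ, |f ω| ≤ R) (hg : g =ᵐ[μ] μ[f | m]) : ∀ᵐ ω ∂μ, |g ω| ≤ R := by
  filter_upwards [hg, ae_bdd_abs_condExp_of_ae_bdd_abs hf] with ω h_eq h_le
  rwa [h_eq]

end Orthogonality

section BallCovering

variable {E : Type*} {ρ : ℝ}

lemma measurable_measure_ball [PseudoMetricSpace E] [SecondCountableTopology E]
    [MeasurableSpace E] [OpensMeasurableSpace E] (ν : Measure E) [SFinite ν] (ρ : ℝ) :
    Measurable fun z => ν (Metric.ball z ρ) := by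
  have hset : MeasurableSet {q : E × E | dist q.2 q.1 < ρ} :=
    measurableSet_lt (measurable_snd.dist measurable_fst) measurable_const
  exact measurable_measure_prodMk_left hset

lemma lintegral_indicator_ball_mul_inv_measure_ball_le [PseudoMetricSpace E] [MeasurableSpace E]
    [OpensMeasurableSpace E] (ν : Measure E) {f : E → ℝ≥0∞} (c : E) :
    ∫⁻ z, (Metric.ball c (ρ / 2)).indicator (fun z => f z * (ν (Metric.ball z ρ))⁻¹) z ∂ν
      ≤ ⨆ z ∈ Metric.ball c (ρ / 2), f z := by
  have ball_subset {z : E} (hz : z ∈ Metric.ball c (ρ / 2)) :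
      Metric.ball c (ρ / 2) ⊆ Metric.ball z ρ :=
    Metric.ball_subset_ball' (by linarith [Metric.mem_ball'.1 hz])
  calc _ ≤ ∫⁻ z, (Metric.ball c (ρ / 2)).indicator
          (fun _ => (⨆ z ∈ Metric.ball c (ρ / 2), f z) * (ν (Metric.ball c (ρ / 2)))⁻¹) z ∂ν := by
        refine lintegral_mono fun z => ?_
        by_cases hz : z ∈ Metric.ball c (ρ / 2)
        · simp only [Set.indicator_of_mem hz]
          gcongr
          · exact le_iSup₂ (f := fun z _ => f z) z hz
          · exact ball_subset hz
        · simp only [Set.indicator_of_notMem hz, le_refl]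
    _ = (⨆ z ∈ Metric.ball c (ρ / 2), f z) *
          ((ν (Metric.ball c (ρ / 2)))⁻¹ * ν (Metric.ball c (ρ / 2))) := by
        rw [lintegral_indicator_const measurableSet_ball, mul_assoc]
    _ ≤ ⨆ z ∈ Metric.ball c (ρ / 2), f z := mul_le_of_le_one_right' (ENNReal.inv_mul_le_one _)

variable [NormedAddCommGroup E] [MeasurableSpace E] [BorelSpace E]

lemma addHaar_closedBall_div_ball [NormedSpace ℝ E] [FiniteDimensional ℝ E] (m : Measure E)
    [m.IsAddHaarMeasure] {R s : ℝ} (hR : 0 ≤ R) (hs : 0 < s) :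
    m (Metric.closedBall 0 R) / m (Metric.ball 0 s)
      = ENNReal.ofReal ((R / s) ^ Module.finrank ℝ E) := by
  have : ProperSpace E := FiniteDimensional.proper_real E
  rw [Measure.addHaar_closedBall m 0 hR, Measure.addHaar_ball_of_pos m 0 hs,
    ENNReal.mul_div_mul_right _ _ (Metric.measure_ball_pos m 0 one_pos).ne' measure_ball_lt_top.ne,
    ← ENNReal.ofReal_div_of_pos (pow_pos hs _), div_pow]

variable [ProperSpace E] (m : Measure E) [m.IsAddHaarMeasure]

/- Average over the centre `c` of a ball of half the radius: if it contains `z`, then it lies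
inside `ball z ρ`. -/
lemma lintegral_mul_inv_measure_ball_le (ν : Measure E) [SFinite ν] (hρ : 0 < ρ)
    {f : E → ℝ≥0∞} (hf : Measurable f) :
    ∫⁻ z, f z * (ν (Metric.ball z ρ))⁻¹ ∂ν
      ≤ (∫⁻ c, ⨆ z ∈ Metric.ball c (ρ / 2), f z ∂m) / m (Metric.ball 0 (ρ / 2)) := by
  have hweight : Measurable fun z => f z * (ν (Metric.ball z ρ))⁻¹ :=
    hf.mul (measurable_measure_ball ν ρ).inv
  have hset : MeasurableSet {q : E × E | dist q.1 q.2 < ρ / 2} :=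
    measurableSet_lt (measurable_fst.dist measurable_snd) measurable_const
  have hball : m (Metric.ball 0 (ρ / 2)) ≠ 0 :=
    (Metric.measure_ball_pos m 0 (half_pos hρ)).ne'
  rw [ENNReal.le_div_iff_mul_le (.inl hball) (.inl measure_ball_lt_top.ne),
    ← lintegral_mul_const _ hweight]
  calc ∫⁻ z, f z * (ν (Metric.ball z ρ))⁻¹ * m (Metric.ball 0 (ρ / 2)) ∂ν
      = ∫⁻ z, ∫⁻ c, (Metric.ball c (ρ / 2)).indicator
          (fun z => f z * (ν (Metric.ball z ρ))⁻¹) z ∂m ∂ν := by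
        refine lintegral_congr fun z => ?_
        rw [← Measure.addHaar_ball_center m z, ← lintegral_indicator_const measurableSet_ball]
        simp only [Set.indicator, Metric.mem_ball, dist_comm]
    _ = ∫⁻ c, ∫⁻ z, (Metric.ball c (ρ / 2)).indicator
          (fun z => f z * (ν (Metric.ball z ρ))⁻¹) z ∂ν ∂m :=
        lintegral_lintegral_swap ((hweight.comp measurable_fst).indicator hset).aemeasurable
    _ ≤ ∫⁻ c, ⨆ z ∈ Metric.ball c (ρ / 2), f z ∂m :=
        lintegral_mono (lintegral_indicator_ball_mul_inv_measure_ball_le ν)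

lemma lintegral_inv_measure_ball_le (ν : Measure E) [SFinite ν] (hρ : 0 < ρ) {A : ℝ}
    (hA : ∀ᵐ z ∂ν, ‖z‖ ≤ A) :
    ∫⁻ z, (ν (Metric.ball z ρ))⁻¹ ∂ν
      ≤ m (Metric.closedBall 0 (A + ρ / 2)) / m (Metric.ball 0 (ρ / 2)) := by
  have iSup_indicator_le (c : E) :
      ⨆ z ∈ Metric.ball c (ρ / 2), (Metric.closedBall (0 : E) A).indicator (1 : E → ℝ≥0∞) z
        ≤ (Metric.closedBall (0 : E) (A + ρ / 2)).indicator 1 c := by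
    refine iSup₂_le fun z hz => Set.indicator_apply_le' (fun hzA => ?_) fun _ => zero_le
    rw [mem_closedBall_zero_iff] at hzA
    have hc : c ∈ Metric.closedBall 0 (A + ρ / 2) := by
      rw [mem_closedBall_zero_iff]
      linarith [norm_le_norm_add_norm_sub' c z, mem_ball_iff_norm'.1 hz]
    rw [Set.indicator_of_mem hc, Pi.one_apply, Pi.one_apply]
  calc ∫⁻ z, (ν (Metric.ball z ρ))⁻¹ ∂ν
      = ∫⁻ z, (Metric.closedBall 0 A).indicator 1 z * (ν (Metric.ball z ρ))⁻¹ ∂ν := by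
        refine lintegral_congr_ae (hA.mono fun z hz => ?_)
        simp only [Set.indicator_of_mem (mem_closedBall_zero_iff.2 hz), Pi.one_apply, one_mul]
    _ ≤ (∫⁻ c, ⨆ z ∈ Metric.ball c (ρ / 2), (Metric.closedBall (0 : E) A).indicator 1 z ∂m)
          / m (Metric.ball 0 (ρ / 2)) :=
        lintegral_mul_inv_measure_ball_le m ν hρ
          (measurable_one.indicator Metric.isClosed_closedBall.measurableSet)
    _ ≤ m (Metric.closedBall 0 (A + ρ / 2)) / m (Metric.ball 0 (ρ / 2)) := by
        rw [← lintegral_indicator_one (μ := m) Metric.isClosed_closedBall.measurableSet]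
        gcongr with c
        exact iSup_indicator_le c

lemma lintegral_lintegral_sub_mul_inv_measure_ball_le (ν : Measure E) [IsProbabilityMeasure ν]
    (hρ : 0 < ρ) {g : E → ℝ≥0∞} (hg : Measurable g) :
    ∫⁻ z, (∫⁻ z', g (z - z') ∂ν) * (ν (Metric.ball z ρ))⁻¹ ∂ν
      ≤ (∫⁻ c, ⨆ u ∈ Metric.ball c (ρ / 2), g u ∂m) / m (Metric.ball 0 (ρ / 2)) := by
  have hg_sub : Measurable fun q : E × E => g (q.1 - q.2) :=
    hg.comp (measurable_fst.sub measurable_snd)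
  have iSup_translate (c z' : E) :
      ⨆ z ∈ Metric.ball c (ρ / 2), g (z - z') = ⨆ u ∈ Metric.ball (c - z') (ρ / 2), g u :=
    (Equiv.subRight z').iSup_congr fun z => by
      simp only [Equiv.subRight_apply, Metric.mem_ball, dist_sub_right]
  calc ∫⁻ z, (∫⁻ z', g (z - z') ∂ν) * (ν (Metric.ball z ρ))⁻¹ ∂ν
      = ∫⁻ z, ∫⁻ z', g (z - z') * (ν (Metric.ball z ρ))⁻¹ ∂ν ∂ν :=
        lintegral_congr fun z => (lintegral_mul_const _ (hg_sub.comp measurable_prodMk_left)).symm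
    _ = ∫⁻ z', ∫⁻ z, g (z - z') * (ν (Metric.ball z ρ))⁻¹ ∂ν ∂ν :=
        lintegral_lintegral_swap (hg_sub.mul
          ((measurable_measure_ball ν ρ).comp measurable_fst).inv).aemeasurable
    _ ≤ ∫⁻ _, (∫⁻ c, ⨆ u ∈ Metric.ball c (ρ / 2), g u ∂m) / m (Metric.ball 0 (ρ / 2)) ∂ν := by
        gcongr with z'
        have hg_translate : Measurable fun z => g (z - z') := hg.comp (measurable_sub_const z')
        refine (lintegral_mul_inv_measure_ball_le m ν hρ hg_translate).trans_eq ?_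
        rw [funext (iSup_translate · z'), lintegral_sub_right_eq_self (μ := m)
          fun c => ⨆ u ∈ Metric.ball c (ρ / 2), g u]
    _ = (∫⁻ c, ⨆ u ∈ Metric.ball c (ρ / 2), g u ∂m) / m (Metric.ball 0 (ρ / 2)) := by
        rw [lintegral_const, measure_univ, mul_one]

end BallCovering

lemma comap_const_smul₀ {Ω G₀ E : Type*} [GroupWithZero G₀] [MulAction G₀ E] [MeasurableSpace E]
    [MeasurableConstSMul G₀ E] {c : G₀} (hc : c ≠ 0) (Z : Ω → E) :
    MeasurableSpace.comap (c • Z) inferInstance = MeasurableSpace.comap Z inferInstance := by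
  conv_rhs => rw [← (MeasurableEquiv.smul₀ (α := E) c hc).measurableEmbedding.comap_eq,
    MeasurableSpace.comap_comp]
  rfl

section NadarayaWatson

/-- The weight `K (u - x i) / ∑ j, K (u - x j)` of the `i`-th design point in the
Nadaraya-Watson estimator at `u` with unit bandwidth; all weights are `0` when the sum is. -/
noncomputable def nwWeight {ι E : Type*} [Fintype ι] [Sub E] (K : E → ℝ) (u : E) (x : ι → E)
    (i : ι) : ℝ :=
  K (u - x i) / ∑ j, K (u - x j)

/-- The Nadaraya-Watson estimator at `u` with unit bandwidth, design points `x` and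
responses `y`. -/
noncomputable def nwEstimator {ι E : Type*} [Fintype ι] [Sub E] (K : E → ℝ) (u : E) (x : ι → E)
    (y : ι → ℝ) : ℝ :=
  ∑ i, nwWeight K u x i * y i

/-- A kernel with values in `[0, 1]` that is at least `b > 0` on the open ball of radius `ρ`: the
part of regularity that does not concern the decay of `K` at infinity. -/
structure IsWindowKernel {E : Type*} [Norm E] [MeasurableSpace E] (K : E → ℝ) (b ρ : ℝ) :
    Prop where
  b_pos : 0 < b
  measurable : Measurable K
  nonneg : ∀ z, 0 ≤ K z
  lower : ∀ z, ‖z‖ < ρ → b ≤ K z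
  le_one : ∀ z, K z ≤ 1

lemma IsRegularKernel.isWindowKernel {M : ℕ} {K : EuclideanSpace ℝ (Fin M) → ℝ} {b ρ κ₀ : ℝ}
    (hK : IsRegularKernel K b ρ κ₀) : IsWindowKernel K b ρ :=
  ⟨hK.b_pos, hK.measurable, hK.nonneg, hK.lower, hK.le_one⟩

lemma nwEstimator_eq_sub_add {ι E : Type*} [Fintype ι] [Sub E] (K : E → ℝ) (u : E) (x : ι → E)
    (y y' : ι → ℝ) : nwEstimator K u x y = nwEstimator K u x (y - y') + nwEstimator K u x y' := by
  simp only [nwEstimator, Pi.sub_apply, mul_sub, Finset.sum_sub_distrib, sub_add_cancel]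

lemma ofReal_sq_nwEstimator_sub_le {ι E : Type*} [Fintype ι] [Sub E] (K : E → ℝ) (u : E)
    (x : ι → E) (y y' : ι → ℝ) (c : ℝ) :
    ENNReal.ofReal ((nwEstimator K u x y - c) ^ 2)
      ≤ 2 * ENNReal.ofReal (nwEstimator K u x (y - y') ^ 2)
        + 2 * ENNReal.ofReal ((nwEstimator K u x y' - c) ^ 2) := by
  rw [nwEstimator_eq_sub_add K u x y y', add_sub_assoc, ← mul_add,
    ← ENNReal.ofReal_add (sq_nonneg _) (sq_nonneg _), ← ENNReal.ofReal_ofNat 2,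
    ← ENNReal.ofReal_mul zero_le_two]
  exact ENNReal.ofReal_le_ofReal add_sq_le

variable {E : Type*} [NormedAddCommGroup E] [MeasurableSpace E] {K : E → ℝ} {b ρ : ℝ}

namespace IsWindowKernel

lemma abs_nwWeight_le_one (hK : IsWindowKernel K b ρ) {ι : Type*} [Fintype ι] (u : E) (x : ι → E)
    (i : ι) :
    |nwWeight K u x i| ≤ 1 := by
  have sum_nonneg : 0 ≤ ∑ j, K (u - x j) := Finset.sum_nonneg fun j _ => hK.nonneg _
  rw [nwWeight, abs_of_nonneg (div_nonneg (hK.nonneg _) sum_nonneg)]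
  exact div_le_one_of_le₀ (Finset.single_le_sum (f := fun j => K (u - x j))
    (fun j _ => hK.nonneg _) (Finset.mem_univ i)) sum_nonneg

lemma le_of_mem_preimage_ball (hK : IsWindowKernel K b ρ) {Ω : Type*} {Z : Ω → E} {u : E} {a : Ω}
    (ha : a ∈ Z ⁻¹' Metric.ball u ρ) : b ≤ K (u - Z a) :=
  hK.lower _ (mem_ball_iff_norm'.1 ha)

lemma sum_sq_nwWeight_le (hK : IsWindowKernel K b ρ) {ι Ω : Type*} [Fintype ι] (Z : Ω → E) (u : E)
    (ω : ι → Ω) :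
    ∑ i, nwWeight K u (Z ∘ ω) i ^ 2
      ≤ (1 + 2 / b) * (1 + (hitCount (Z ⁻¹' Metric.ball u ρ) ω : ℝ))⁻¹ := by
  classical
  exact sum_sq_div_sum_le hK.b_pos (fun i => hK.nonneg _) (fun i => hK.le_one _) fun i hi =>
    hK.le_of_mem_preimage_ball (Finset.mem_filter_univ _ |>.1 hi)

lemma sq_nwEstimator_sub_le (hK : IsWindowKernel K b ρ) {ι Ω : Type*} [Fintype ι] (Z : Ω → E)
    (u : E) (ω : ι → Ω) {y : ι → ℝ} {g B : ℝ} (hy : ∀ i, |y i| ≤ B) (hg : |g| ≤ B) :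
    (nwEstimator K u (Z ∘ ω) y - g) ^ 2
      ≤ (4 * B ^ 2 + 2 / b * ∑ i, K (u - Z (ω i)) * (y i - g) ^ 2)
        * (1 + (hitCount (Z ⁻¹' Metric.ball u ρ) ω : ℝ))⁻¹ := by
  classical
  exact sq_sum_div_sum_mul_sub_le hK.b_pos (fun i => hK.nonneg _) (fun i hi =>
    hK.le_of_mem_preimage_ball (Finset.mem_filter_univ _ |>.1 hi)) hy hg

variable {Ω : Type*} [MeasurableSpace Ω] {μ : Measure Ω} {Z : Ω → E}

lemma lintegral_ofReal_bias_le (hK : IsWindowKernel K b ρ) {L : ℝ≥0} {G : E → ℝ}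
    (hG : LipschitzWith L G) (u : E) :
    ∫⁻ a, ENNReal.ofReal (2 / b * (K (u - Z a) * (G (Z a) - G u) ^ 2)) ∂μ
      ≤ ENNReal.ofReal (2 / b * L ^ 2)
        * ∫⁻ a, ENNReal.ofReal (K (u - Z a) * ‖u - Z a‖ ^ 2) ∂μ := by
  have hb := hK.b_pos
  rw [← lintegral_const_mul' _ _ ENNReal.ofReal_ne_top]
  gcongr with a
  rw [← ENNReal.ofReal_mul (by positivity)]
  refine ENNReal.ofReal_le_ofReal ?_
  calc 2 / b * (K (u - Z a) * (G (Z a) - G u) ^ 2)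
      ≤ 2 / b * (K (u - Z a) * (L * ‖u - Z a‖) ^ 2) := by
        have hKu := hK.nonneg (u - Z a)
        gcongr 2 / b * (_ * ?_)
        rw [← sq_abs, norm_sub_rev]
        gcongr
        exact hG.norm_sub_le _ _
    _ = 2 / b * L ^ 2 * (K (u - Z a) * ‖u - Z a‖ ^ 2) := by ring

variable [BorelSpace E] [IsProbabilityMeasure μ]

lemma lintegral_sq_nwEstimator_sub_le (hK : IsWindowKernel K b ρ) (hZ : Measurable Z) {g : Ω → ℝ}
    (hg : Measurable g) {B : ℝ} (hgB : ∀ᵐ ω ∂μ, |g ω| ≤ B) (u : E) {c : ℝ} (hc : |c| ≤ B) (n : ℕ) :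
    ∫⁻ ω, ENNReal.ofReal ((nwEstimator K u (Z ∘ ω) (g ∘ ω) - c) ^ 2)
        ∂(Measure.pi fun _ : Fin (n + 1) => μ)
      ≤ (ENNReal.ofReal (4 * B ^ 2) * (n + 1 : ℝ≥0∞)⁻¹
          + ∫⁻ a, ENNReal.ofReal (2 / b * (K (u - Z a) * (g a - c) ^ 2)) ∂μ)
        * (μ (Z ⁻¹' Metric.ball u ρ))⁻¹ := by
  have hA : MeasurableSet (Z ⁻¹' Metric.ball u ρ) := hZ measurableSet_ball
  have hb := hK.b_pos
  have := hK.measurable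
  set f : Ω → ℝ≥0∞ := fun a => ENNReal.ofReal (4 * B ^ 2) * (n + 1 : ℝ≥0∞)⁻¹
    + ENNReal.ofReal (2 / b * (K (u - Z a) * (g a - c) ^ 2))
  have abs_g_le : ∀ᵐ ω ∂(Measure.pi fun _ : Fin (n + 1) => μ), ∀ i, |g (ω i)| ≤ B :=
    ae_all_iff.2 fun i => (Measure.tendsto_eval_ae_ae (μ := fun _ => μ)).eventually hgB
  have sum_f (ω : Fin (n + 1) → Ω) : ∑ i, f (ω i) = ENNReal.ofReal
      (4 * B ^ 2 + 2 / b * ∑ i, K (u - Z (ω i)) * (g (ω i) - c) ^ 2) := by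
    have term_nonneg (i) : 0 ≤ 2 / b * (K (u - Z (ω i)) * (g (ω i) - c) ^ 2) :=
      mul_nonneg (by positivity) (mul_nonneg (hK.nonneg _) (sq_nonneg _))
    rw [Finset.mul_sum, ENNReal.ofReal_add (by positivity)
      (Finset.sum_nonneg fun i _ => term_nonneg i), ENNReal.ofReal_sum_of_nonneg
      fun i _ => term_nonneg i, Finset.sum_add_distrib, Finset.sum_const, Finset.card_univ,
      Fintype.card_fin, nsmul_eq_mul, Nat.cast_add_one, mul_left_comm,
      ENNReal.mul_inv_cancel (by simp) (by finiteness), mul_one]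
  calc _ ≤ ∫⁻ ω, (∑ i, f (ω i)) * (1 + (hitCount (Z ⁻¹' Metric.ball u ρ) ω : ℝ≥0∞))⁻¹
          ∂(Measure.pi fun _ : Fin (n + 1) => μ) := by
        refine lintegral_mono_ae (abs_g_le.mono fun ω hω => ?_)
        rw [sum_f, ← ofReal_inv_one_add_natCast, ← ENNReal.ofReal_mul' (by positivity)]
        exact ENNReal.ofReal_le_ofReal (hK.sq_nwEstimator_sub_le Z u ω hω hc)
    _ ≤ (∫⁻ a, f a ∂μ) * (μ (Z ⁻¹' Metric.ball u ρ))⁻¹ :=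
        lintegral_sum_mul_inv_one_add_hitCount_le μ hA (by fun_prop) n
    _ = _ := by rw [lintegral_add_left measurable_const, lintegral_const, measure_univ, mul_one]

section

variable [SecondCountableTopology E]

lemma measurable_nwWeight (hK : IsWindowKernel K b ρ) {ι : Type*} [Fintype ι] {u : Ω → E}
    {x : Ω → ι → E} (hu : Measurable u) (hx : Measurable x) (i : ι) :
    Measurable fun ω => nwWeight K (u ω) (x ω) i := by
  have := hK.measurable
  unfold nwWeight
  fun_prop

lemma measurable_nwEstimator (hK : IsWindowKernel K b ρ) {ι : Type*} [Fintype ι] {u : Ω → E}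
    {x : Ω → ι → E} {y : Ω → ι → ℝ} (hu : Measurable u) (hx : Measurable x) (hy : Measurable y) :
    Measurable fun ω => nwEstimator K (u ω) (x ω) (y ω) := by
  have (i : ι) := hK.measurable_nwWeight hu hx i
  unfold nwEstimator
  fun_prop

lemma lintegral_sq_nwEstimator_noise_le (hK : IsWindowKernel K b ρ) (hZ : Measurable Z)
    {ε : Ω → ℝ} (hε : Measurable ε) {D : ℝ} (hD : ∀ᵐ ω ∂μ, |ε ω| ≤ D)
    (hεZ : μ[ε | MeasurableSpace.comap Z inferInstance] =ᵐ[μ] 0) (u : E) (n : ℕ) :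
    ∫⁻ ω, ENNReal.ofReal (nwEstimator K u (Z ∘ ω) (ε ∘ ω) ^ 2)
        ∂(Measure.pi fun _ : Fin (n + 1) => μ)
      ≤ ENNReal.ofReal (D ^ 2 * (1 + 2 / b)) * (n + 1 : ℝ≥0∞)⁻¹
        * (μ (Z ⁻¹' Metric.ball u ρ))⁻¹ := by
  have hA : MeasurableSet (Z ⁻¹' Metric.ball u ρ) := hZ measurableSet_ball
  have hb := hK.b_pos
  calc _ ≤ ∫⁻ ω, ENNReal.ofReal (D ^ 2 * ∑ i, nwWeight K u (Z ∘ ω) i ^ 2)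
        ∂(Measure.pi fun _ : Fin (n + 1) => μ) :=
        lintegral_sq_sum_mul_noise_le hZ hε hD hεZ
          (fun i => hK.measurable_nwWeight measurable_const measurable_id i)
          fun i x => hK.abs_nwWeight_le_one u x i
    _ ≤ ∫⁻ ω, ENNReal.ofReal (D ^ 2 * (1 + 2 / b))
          * (1 + (hitCount (Z ⁻¹' Metric.ball u ρ) ω : ℝ≥0∞))⁻¹
          ∂(Measure.pi fun _ : Fin (n + 1) => μ) := by
        gcongr with ω
        rw [← ofReal_inv_one_add_natCast, ← ENNReal.ofReal_mul (by positivity), mul_assoc]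
        gcongr
        exact hK.sum_sq_nwWeight_le Z u ω
    _ ≤ ENNReal.ofReal (D ^ 2 * (1 + 2 / b)) *
          ((((n + 1 : ℕ) : ℝ≥0∞) + 1) * μ (Z ⁻¹' Metric.ball u ρ))⁻¹ := by
        rw [lintegral_const_mul _ (measurable_inv_one_add_hitCount hA)]
        gcongr
        exact lintegral_inv_one_add_hitCount_le μ hA (n + 1)
    _ ≤ ENNReal.ofReal (D ^ 2 * (1 + 2 / b)) *
          ((n + 1 : ℝ≥0∞) * μ (Z ⁻¹' Metric.ball u ρ))⁻¹ := by
        gcongr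
        exact le_self_add
    _ = _ := by
        rw [ENNReal.mul_inv (.inl (by simp)) (.inl (by finiteness)), mul_assoc]

lemma lintegral_sq_nwEstimator_sub_regression_le (hK : IsWindowKernel K b ρ) (hZ : Measurable Z)
    {Y : Ω → ℝ} (hY : Measurable Y) {R : ℝ} (hYR : ∀ᵐ ω ∂μ, |Y ω| ≤ R) {G : E → ℝ}
    (hG : Measurable G) (hGY : G ∘ Z =ᵐ[μ] μ[Y | MeasurableSpace.comap Z inferInstance]) {u : E}
    (hu : |G u| ≤ R) (n : ℕ) :
    ∫⁻ ω, ENNReal.ofReal ((nwEstimator K u (Z ∘ ω) (Y ∘ ω) - G u) ^ 2)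
        ∂(Measure.pi fun _ : Fin (n + 1) => μ)
      ≤ 2 * (ENNReal.ofReal (8 * R ^ 2 * (1 + 1 / b)) * (n + 1 : ℝ≥0∞)⁻¹
          + ∫⁻ a, ENNReal.ofReal (2 / b * (K (u - Z a) * (G (Z a) - G u) ^ 2)) ∂μ)
        * (μ (Z ⁻¹' Metric.ball u ρ))⁻¹ := by
  have hb := hK.b_pos
  have := hK.measurable
  have abs_G_le : ∀ᵐ ω ∂μ, |(G ∘ Z) ω| ≤ R := ae_abs_le_of_eq_condExp hYR hGY
  have abs_noise_le : ∀ᵐ ω ∂μ, |(Y - G ∘ Z) ω| ≤ 2 * R := by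
    filter_upwards [hYR, abs_G_le] with ω hYω hGω
    exact (abs_sub _ _).trans (by linarith)
  have condExp_noise : μ[Y - G ∘ Z | MeasurableSpace.comap Z inferInstance] =ᵐ[μ] 0 :=
    condExp_sub_eq_zero_of_eq_condExp hZ.comap_le
      (.of_bound hY.aestronglyMeasurable R hYR) hGY
  have noise_le := hK.lintegral_sq_nwEstimator_noise_le hZ (hY.sub (hG.comp hZ)) abs_noise_le
    condExp_noise u n
  have bias_le := hK.lintegral_sq_nwEstimator_sub_le hZ (hG.comp hZ) abs_G_le u hu n
  have measurable_noise : Measurable fun ω : Fin (n + 1) → Ω =>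
      nwEstimator K u (Z ∘ ω) ((Y - G ∘ Z) ∘ ω) :=
    hK.measurable_nwEstimator measurable_const (by fun_prop) (by fun_prop)
  calc _ ≤ ∫⁻ ω, (2 * ENNReal.ofReal (nwEstimator K u (Z ∘ ω) ((Y - G ∘ Z) ∘ ω) ^ 2)
          + 2 * ENNReal.ofReal ((nwEstimator K u (Z ∘ ω) ((G ∘ Z) ∘ ω) - G u) ^ 2))
          ∂(Measure.pi fun _ : Fin (n + 1) => μ) :=
        lintegral_mono fun ω => ofReal_sq_nwEstimator_sub_le K u _ _ _ _
    _ ≤ 2 * (ENNReal.ofReal ((2 * R) ^ 2 * (1 + 2 / b)) * (n + 1 : ℝ≥0∞)⁻¹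
            * (μ (Z ⁻¹' Metric.ball u ρ))⁻¹)
          + 2 * ((ENNReal.ofReal (4 * R ^ 2) * (n + 1 : ℝ≥0∞)⁻¹
            + ∫⁻ a, ENNReal.ofReal (2 / b * (K (u - Z a) * (G (Z a) - G u) ^ 2)) ∂μ)
            * (μ (Z ⁻¹' Metric.ball u ρ))⁻¹) := by
        rw [lintegral_add_left (by fun_prop), lintegral_const_mul' _ _ (by simp),
          lintegral_const_mul' _ _ (by simp)]
        gcongr
        exact bias_le
    _ = _ := by
        have const_eq : ENNReal.ofReal (8 * R ^ 2 * (1 + 1 / b))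
            = ENNReal.ofReal ((2 * R) ^ 2 * (1 + 2 / b)) + ENNReal.ofReal (4 * R ^ 2) := by
          rw [← ENNReal.ofReal_add (by positivity) (by positivity)]
          ring_nf
        rw [const_eq]
        ring

end

lemma lintegral_lintegral_sq_nwEstimator_sub_le (hK : IsWindowKernel K b ρ) [ProperSpace E]
    (m : Measure E) [m.IsAddHaarMeasure] (hρ : 0 < ρ) (hZ : Measurable Z) {A : ℝ}
    (hA : ∀ᵐ ω ∂μ, ‖Z ω‖ ≤ A) {Y : Ω → ℝ} (hY : Measurable Y) {R : ℝ} (hYR : ∀ᵐ ω ∂μ, |Y ω| ≤ R)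
    {L : ℝ≥0} {G : E → ℝ} (hG : LipschitzWith L G)
    (hGY : G ∘ Z =ᵐ[μ] μ[Y | MeasurableSpace.comap Z inferInstance]) (n : ℕ) :
    ∫⁻ ω', ∫⁻ ω, ENNReal.ofReal ((nwEstimator K (Z ω') (Z ∘ ω) (Y ∘ ω) - G (Z ω')) ^ 2)
        ∂(Measure.pi fun _ : Fin (n + 1) => μ) ∂μ
      ≤ 2 * (ENNReal.ofReal (8 * R ^ 2 * (1 + 1 / b)) * (n + 1 : ℝ≥0∞)⁻¹
            * (m (Metric.closedBall 0 (A + ρ / 2)) / m (Metric.ball 0 (ρ / 2)))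
          + ENNReal.ofReal (2 / b * L ^ 2)
            * ((∫⁻ c, ⨆ u ∈ Metric.ball c (ρ / 2), ENNReal.ofReal (K u * ‖u‖ ^ 2) ∂m)
              / m (Metric.ball 0 (ρ / 2)))) := by
  have := hK.measurable
  set V := ENNReal.ofReal (8 * R ^ 2 * (1 + 1 / b)) * (n + 1 : ℝ≥0∞)⁻¹
  obtain ⟨ν, hZν⟩ : ∃ ν, MeasurePreserving Z μ ν := ⟨_, hZ.measurePreserving μ⟩
  have : IsProbabilityMeasure ν := hZν.map_eq ▸
    Measure.isProbabilityMeasure_map hZ.aemeasurable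
  set g : E → ℝ≥0∞ := fun u => ENNReal.ofReal (K u * ‖u‖ ^ 2)
  have hg : Measurable g := by fun_prop
  have hw : Measurable fun z => (ν (Metric.ball z ρ))⁻¹ := (measurable_measure_ball ν ρ).inv
  have hg_integral : Measurable fun u => ∫⁻ z, g (u - z) ∂ν :=
    (hg.comp (measurable_fst.sub measurable_snd)).lintegral_prod_right'
  calc _ ≤ ∫⁻ ω', 2 * (V + ENNReal.ofReal (2 / b * L ^ 2) * ∫⁻ z, g (Z ω' - z) ∂ν)
          * (ν (Metric.ball (Z ω') ρ))⁻¹ ∂μ := by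
        refine lintegral_mono_ae ((ae_abs_le_of_eq_condExp hYR hGY).mono fun ω' hω' => ?_)
        rw [← hZν.lintegral_comp (by fun_prop), ← hZν.measure_preimage
          measurableSet_ball.nullMeasurableSet]
        refine (hK.lintegral_sq_nwEstimator_sub_regression_le hZ hY hYR
          hG.continuous.measurable hGY hω' n).trans ?_
        gcongr
        exact hK.lintegral_ofReal_bias_le hG (Z ω')
    _ = ∫⁻ z, 2 * (V + ENNReal.ofReal (2 / b * L ^ 2) * ∫⁻ z', g (z - z') ∂ν)
          * (ν (Metric.ball z ρ))⁻¹ ∂ν :=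
        hZν.lintegral_comp (((hg_integral.const_mul _).const_add _ |>.const_mul _).mul hw)
    _ = 2 * (V * ∫⁻ z, (ν (Metric.ball z ρ))⁻¹ ∂ν + ENNReal.ofReal (2 / b * L ^ 2)
          * ∫⁻ z, (∫⁻ z', g (z - z') ∂ν) * (ν (Metric.ball z ρ))⁻¹ ∂ν) := by
        simp only [mul_assoc, add_mul]
        rw [lintegral_const_mul' _ _ ENNReal.ofNat_ne_top, lintegral_add_left (hw.const_mul V),
          lintegral_const_mul _ hw, lintegral_const_mul' _ _ ENNReal.ofReal_ne_top]
    _ ≤ _ := by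
        gcongr
        · exact lintegral_inv_measure_ball_le m ν hρ
            (hZν.map_eq ▸ (ae_map_iff hZ.aemeasurable (measurableSet_le measurable_norm
              measurable_const)).2 hA)
        · exact lintegral_lintegral_sub_mul_inv_measure_ball_le m ν hρ hg

/- Rescaling the design by `h⁻¹` reduces to unit bandwidth, with `G (h • ·)` in place of `G`. -/
lemma lintegral_lintegral_sq_nwEstimator_smul_sub_le (hK : IsWindowKernel K b ρ) [NormedSpace ℝ E]
    [FiniteDimensional ℝ E] (m : Measure E) [m.IsAddHaarMeasure] (hρ : 0 < ρ) (hZ : Measurable Z)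
    {A : ℝ} (hA : ∀ᵐ ω ∂μ, ‖Z ω‖ ≤ A) {Y : Ω → ℝ} (hY : Measurable Y) {R : ℝ}
    (hYR : ∀ᵐ ω ∂μ, |Y ω| ≤ R) {L : ℝ≥0} {G : E → ℝ} (hG : LipschitzWith L G)
    (hGY : G ∘ Z =ᵐ[μ] μ[Y | MeasurableSpace.comap Z inferInstance]) {h : ℝ≥0} (hh : 0 < h)
    (n : ℕ) :
    ∫⁻ ω', ∫⁻ ω, ENNReal.ofReal
        ((nwEstimator K ((h : ℝ)⁻¹ • Z ω') (fun i => (h : ℝ)⁻¹ • Z (ω i)) (Y ∘ ω)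
          - G (Z ω')) ^ 2) ∂(Measure.pi fun _ : Fin (n + 1) => μ) ∂μ
      ≤ 2 * (ENNReal.ofReal (8 * R ^ 2 * (1 + 1 / b)) * (n + 1 : ℝ≥0∞)⁻¹
            * ENNReal.ofReal ((1 + 2 * A / (ρ * h)) ^ Module.finrank ℝ E)
          + ENNReal.ofReal (2 / b * (L * h) ^ 2)
            * ((∫⁻ c, ⨆ u ∈ Metric.ball c (ρ / 2), ENNReal.ofReal (K u * ‖u‖ ^ 2) ∂m)
              / m (Metric.ball 0 (ρ / 2)))) := by
  have : ProperSpace E := FiniteDimensional.proper_real E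
  have hh' : (0 : ℝ) < h := hh
  obtain ⟨ω₀, hω₀⟩ := hA.exists
  have hA_nonneg : 0 ≤ A := (norm_nonneg _).trans hω₀
  have smul_inv_smul_Z (ω : Ω) : (h : ℝ) • (h : ℝ)⁻¹ • Z ω = Z ω := smul_inv_smul₀ hh'.ne' _
  have lipschitz_G : LipschitzWith (L * h) fun z => G ((h : ℝ) • z) := by
    simpa [Function.comp_def] using hG.comp (lipschitzWith_smul (β := E) (h : ℝ))
  have norm_le : ∀ᵐ ω ∂μ, ‖((h : ℝ)⁻¹ • Z) ω‖ ≤ A / h := hA.mono fun ω hω => by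
    rw [Pi.smul_apply, norm_smul, Real.norm_of_nonneg (by positivity), div_eq_inv_mul]
    gcongr
  have condExp_G : (fun z => G ((h : ℝ) • z)) ∘ ((h : ℝ)⁻¹ • Z)
      =ᵐ[μ] μ[Y | MeasurableSpace.comap ((h : ℝ)⁻¹ • Z) inferInstance] := by
    simpa only [Function.comp_def, Pi.smul_apply, smul_inv_smul_Z,
      comap_const_smul₀ (inv_ne_zero hh'.ne')] using hGY
  have volume_ratio : m (Metric.closedBall 0 (A / h + ρ / 2)) / m (Metric.ball 0 (ρ / 2))
      = ENNReal.ofReal ((1 + 2 * A / (ρ * h)) ^ Module.finrank ℝ E) := by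
    rw [addHaar_closedBall_div_ball m (by positivity) (half_pos hρ)]
    congr 2
    field_simp
    ring
  simpa only [Function.comp_def, Pi.smul_apply, smul_inv_smul_Z, volume_ratio, NNReal.coe_mul] using
    hK.lintegral_lintegral_sq_nwEstimator_sub_le m hρ (hZ.const_smul (h : ℝ)⁻¹) norm_le hY hYR
      lipschitz_G condExp_G n

end IsWindowKernel

end NadarayaWatson

/- The bandwidth `ℓ ^ (-1 / (d + 2))` balances the variance `1 / (ℓ * h ^ d)` against the squared
bias `h ^ 2`. -/
lemma ofReal_variance_add_sq_bias_le {a B c h : ℝ} (ha : 0 ≤ a) (hB : 0 ≤ B) (hc : 0 ≤ c)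
    (hh : 0 < h) (hh1 : h ≤ 1) {W : ℝ≥0∞} (hW : W ≠ ∞) (d : ℕ) :
    ENNReal.ofReal a * ENNReal.ofReal (h ^ (d + 2)) * ENNReal.ofReal ((1 + B / h) ^ d)
        + ENNReal.ofReal (c * h ^ 2) * W
      ≤ ENNReal.ofReal ((a * (1 + B) ^ d + c * W.toReal) * h ^ 2) := by
  have volume_le : h ^ d * (1 + B / h) ^ d ≤ (1 + B) ^ d := by
    rw [← mul_pow, mul_add, mul_div_cancel₀ _ hh.ne', mul_one]
    gcongr
  calc _ = ENNReal.ofReal (a * (h ^ d * (1 + B / h) ^ d) * h ^ 2 + c * W.toReal * h ^ 2) := by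
        rw [← ENNReal.ofReal_mul ha, ← ENNReal.ofReal_mul (by positivity),
          ← ENNReal.ofReal_toReal hW, ← ENNReal.ofReal_mul (by positivity),
          ENNReal.toReal_ofReal ENNReal.toReal_nonneg,
          ← ENNReal.ofReal_add (by positivity) (by positivity)]
        ring_nf
    _ ≤ ENNReal.ofReal ((a * (1 + B) ^ d + c * W.toReal) * h ^ 2) := by
        rw [add_mul]
        gcongr

lemma IsWindowKernel.exists_lintegral_lintegral_sq_nwEstimator_smul_sub_le {E : Type*}
    [NormedAddCommGroup E] [MeasurableSpace E] [BorelSpace E] [NormedSpace ℝ E]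
    [FiniteDimensional ℝ E] (m : Measure E) [m.IsAddHaarMeasure] {Ω : Type*} [MeasurableSpace Ω]
    {μ : Measure Ω} [IsProbabilityMeasure μ] {K : E → ℝ} {b ρ : ℝ} (hK : IsWindowKernel K b ρ)
    (hρ : 0 < ρ)
    (hKm : ∫⁻ c, ⨆ u ∈ Metric.ball c (ρ / 2), ENNReal.ofReal (K u * ‖u‖ ^ 2) ∂m ≠ ∞)
    {Z : Ω → E} (hZ : Measurable Z) {A : ℝ} (hA : ∀ᵐ ω ∂μ, ‖Z ω‖ ≤ A)
    {Y : Ω → ℝ} (hY : Measurable Y) {R : ℝ} (hYR : ∀ᵐ ω ∂μ, |Y ω| ≤ R) {L : ℝ≥0} {G : E → ℝ}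
    (hG : LipschitzWith L G)
    (hGY : G ∘ Z =ᵐ[μ] μ[Y | MeasurableSpace.comap Z inferInstance]) :
    ∃ C : ℝ, 0 < C ∧ ∀ (ℓ : ℕ) (h : ℝ), 1 ≤ ℓ →
      h = (ℓ : ℝ) ^ (-(1 : ℝ) / (Module.finrank ℝ E + 2)) →
      ∫⁻ ω', ∫⁻ ω, ENNReal.ofReal
          ((nwEstimator K (h⁻¹ • Z ω') (fun i => h⁻¹ • Z (ω i)) (Y ∘ ω) - G (Z ω')) ^ 2)
          ∂(Measure.pi fun _ : Fin ℓ => μ) ∂μ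
        ≤ ENNReal.ofReal (C * h ^ 2) := by
  have hb := hK.b_pos
  obtain ⟨ω₀, hω₀⟩ := hA.exists
  have hA_nonneg : 0 ≤ A := (norm_nonneg _).trans hω₀
  set W := (∫⁻ c, ⨆ u ∈ Metric.ball c (ρ / 2), ENNReal.ofReal (K u * ‖u‖ ^ 2) ∂m)
    / m (Metric.ball 0 (ρ / 2))
  have hW : W ≠ ∞ := ENNReal.div_ne_top hKm (Metric.measure_ball_pos m 0 (half_pos hρ)).ne'
  set S := 8 * R ^ 2 * (1 + 1 / b) * (1 + 2 * A / ρ) ^ Module.finrank ℝ E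
    + 2 / b * L ^ 2 * W.toReal
  have : 0 ≤ S := by positivity
  refine ⟨2 * S + 1, by positivity, fun ℓ h hℓ hh => ?_⟩
  obtain ⟨n, rfl⟩ := Nat.exists_eq_add_of_le' hℓ
  have hh_pos : 0 < h := hh ▸ by positivity
  have hh_le_one : h ≤ 1 := hh ▸ Real.rpow_le_one_of_one_le_of_nonpos (by exact_mod_cast hℓ)
    (div_nonpos_of_nonpos_of_nonneg (by norm_num) (by positivity))
  have inv_card : (n + 1 : ℝ≥0∞)⁻¹ = ENNReal.ofReal (h ^ (Module.finrank ℝ E + 2)) := by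
    rw [add_comm, ← ofReal_inv_one_add_natCast, hh, ← Real.rpow_mul_natCast (by positivity)]
    push_cast
    rw [div_mul_cancel₀ _ (by positivity), Real.rpow_neg_one, add_comm]
  lift h to ℝ≥0 using hh_pos.le
  calc _ ≤ _ := hK.lintegral_lintegral_sq_nwEstimator_smul_sub_le m hρ hZ hA hY hYR hG hGY
        (by exact_mod_cast hh_pos) n
    _ ≤ 2 * ENNReal.ofReal (S * h ^ 2) := by
        rw [inv_card, ← div_div, mul_pow, ← mul_assoc (2 / b)]
        gcongr
        exact ofReal_variance_add_sq_bias_le (by positivity) (by positivity) (by positivity)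
          hh_pos hh_le_one hW _
    _ ≤ ENNReal.ofReal ((2 * S + 1) * h ^ 2) := by
        rw [← ENNReal.ofReal_ofNat 2, ← ENNReal.ofReal_mul zero_le_two]
        refine ENNReal.ofReal_le_ofReal ?_
        nlinarith [sq_nonneg (h : ℝ)]

section PolynomialDecay

lemma tendsto_rpow_mul_exp_neg_rpow_atTop_nhds_zero (s : ℝ) {α : ℝ} (hα : 0 < α) :
    Tendsto (fun t : ℝ => t ^ s * Real.exp (-t ^ α)) atTop (nhds 0) := by
  refine ((tendsto_rpow_mul_exp_neg_mul_atTop_nhds_zero (s / α) 1 one_pos).comp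
    (tendsto_rpow_atTop hα)).congr' ?_
  filter_upwards [eventually_ge_atTop 0] with t ht
  simp only [Function.comp_apply, ← Real.rpow_mul ht, mul_div_cancel₀ s hα.ne', neg_mul, one_mul]

variable {E : Type*} [NormedAddCommGroup E]

lemma exists_le_mul_one_add_norm_rpow_neg_of_exp_tail {K : E → ℝ} (hK : ∀ z, K z ≤ 1)
    {α R C : ℝ} (hα : 0 < α) (hC : 0 ≤ C)
    (htail : ∀ z, R ≤ ‖z‖ → K z ≤ C * Real.exp (-‖z‖ ^ α)) {p : ℝ} (hp : 0 ≤ p) :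
    ∃ D, 0 ≤ D ∧ ∀ z, K z ≤ D * (1 + ‖z‖) ^ (-p) := by
  obtain ⟨T, hT⟩ := eventually_atTop.1 <|
    (tendsto_rpow_mul_exp_neg_rpow_atTop_nhds_zero p hα).eventually_le_const one_pos
  set B := max (max T R) 1
  refine ⟨(1 + B) ^ p + C * 2 ^ p, by positivity, fun z => ?_⟩
  rw [Real.rpow_neg (by positivity), ← div_eq_mul_inv, le_div_iff₀ (by positivity)]
  rcases le_total ‖z‖ B with hz | hz
  · calc K z * (1 + ‖z‖) ^ p ≤ 1 * (1 + B) ^ p := by gcongr; exact hK z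
      _ ≤ (1 + B) ^ p + C * 2 ^ p := by linarith [show 0 ≤ C * 2 ^ p by positivity]
  · obtain ⟨⟨hzT, hzR⟩, hz1⟩ : (T ≤ ‖z‖ ∧ R ≤ ‖z‖) ∧ 1 ≤ ‖z‖ := by
      simpa only [B, max_le_iff] using hz
    calc K z * (1 + ‖z‖) ^ p ≤ C * Real.exp (-‖z‖ ^ α) * (2 * ‖z‖) ^ p := by
          gcongr
          · exact htail z hzR
          · linarith
      _ = C * 2 ^ p * (‖z‖ ^ p * Real.exp (-‖z‖ ^ α)) := by
          rw [Real.mul_rpow zero_le_two (norm_nonneg z)]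
          ring
      _ ≤ C * 2 ^ p * 1 := by
          gcongr
          exact hT _ hzT
      _ ≤ (1 + B) ^ p + C * 2 ^ p := by linarith [show 0 ≤ (1 + B) ^ p by positivity]

lemma mul_norm_pow_le_of_le_mul_one_add_norm_rpow {K : E → ℝ} {D p : ℝ} (hD : 0 ≤ D) (n : ℕ)
    (hK : ∀ z, K z ≤ D * (1 + ‖z‖) ^ (-(p + n))) (z : E) :
    K z * ‖z‖ ^ n ≤ D * (1 + ‖z‖) ^ (-p) := by
  calc K z * ‖z‖ ^ n ≤ D * (1 + ‖z‖) ^ (-(p + n)) * (1 + ‖z‖) ^ n := by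
        gcongr
        · exact hK z
        · exact le_add_of_nonneg_left zero_le_one
    _ = D * (1 + ‖z‖) ^ (-p) := by
        rw [mul_assoc, ← Real.rpow_add_natCast (by positivity)]
        ring_nf

variable [MeasurableSpace E] [BorelSpace E] [NormedSpace ℝ E] [FiniteDimensional ℝ E]

lemma lintegral_iSup_ball_ofReal_ne_top (m : Measure E) [m.IsAddHaarMeasure] {f : E → ℝ}
    {D p : ℝ} (hD : 0 ≤ D) (hp : Module.finrank ℝ E < p)
    (hf : ∀ z, f z ≤ D * (1 + ‖z‖) ^ (-p)) (δ : ℝ) :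
    ∫⁻ c, ⨆ u ∈ Metric.ball c δ, ENNReal.ofReal (f u) ∂m ≠ ∞ := by
  have hp_nonneg : 0 ≤ p := (Nat.cast_nonneg _).trans hp.le
  have iSup_ball_le (c : E) : ⨆ u ∈ Metric.ball c δ, ENNReal.ofReal (f u)
      ≤ ENNReal.ofReal (D * (1 + δ) ^ p * (1 + ‖c‖) ^ (-p)) := by
    refine iSup₂_le fun u hu => ENNReal.ofReal_le_ofReal ((hf u).trans ?_)
    have hδ : 0 < δ := Metric.pos_of_mem_ball hu
    have norm_le : 1 + ‖c‖ ≤ (1 + δ) * (1 + ‖u‖) := by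
      nlinarith [norm_le_norm_add_norm_sub' c u, mem_ball_iff_norm'.1 hu, norm_nonneg u]
    rw [mul_assoc, Real.rpow_neg (by positivity), Real.rpow_neg (by positivity)]
    gcongr D * ?_
    rw [← div_eq_mul_inv, inv_le_comm₀ (by positivity) (by positivity), inv_div,
      div_le_iff₀ (by positivity), ← Real.mul_rpow (by positivity) (by positivity), mul_comm]
    gcongr
  refine ((lintegral_mono iSup_ball_le).trans_lt ?_).ne
  exact ((integrable_one_add_norm hp).const_mul _).lintegral_lt_top

end PolynomialDecay

lemma aggEstimator_eq_nwEstimator {Ω : Type*} {d M : ℕ} (K : EuclideanSpace ℝ (Fin M) → ℝ) (h : ℝ)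
    (r : (Fin d → ℝ) → EuclideanSpace ℝ (Fin M)) (X : Ω → Fin d → ℝ) (Y : Ω → ℝ) {ℓ : ℕ}
    (ω : Fin ℓ → Ω) (x : Fin d → ℝ) :
    aggEstimator K h r X Y ω x
      = nwEstimator K (h⁻¹ • r x) (fun i => h⁻¹ • r (X (ω i))) (Y ∘ ω) := by
  simp only [aggEstimator, kernelWeight, nwEstimator, nwWeight, smul_sub, Function.comp_apply]

lemma integral_prod_le_of_lintegral_lintegral_le {α β : Type*} [MeasurableSpace α]
    [MeasurableSpace β] {μ : Measure α} {ν : Measure β} [SFinite μ] [SFinite ν] {f : α × β → ℝ}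
    (hf : Measurable f) (hf_nonneg : ∀ z, 0 ≤ f z) {C : ℝ} (hC : 0 ≤ C)
    (h : ∫⁻ y, ∫⁻ x, ENNReal.ofReal (f (x, y)) ∂μ ∂ν ≤ ENNReal.ofReal C) :
    ∫ z, f z ∂μ.prod ν ≤ C := by
  rw [integral_eq_lintegral_of_nonneg_ae (.of_forall hf_nonneg) hf.aestronglyMeasurable,
    lintegral_prod_symm' _ hf.ennreal_ofReal]
  exact ENNReal.toReal_le_of_le_ofReal hC h

theorem aggEstimator_variance_rate_general {Ω : Type*} [MeasurableSpace Ω] (μ : Measure Ω)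
    [IsProbabilityMeasure μ] {d M : ℕ} {K : EuclideanSpace ℝ (Fin M) → ℝ} {b ρ : ℝ}
    (hK : IsWindowKernel K b ρ) (hρ : 0 < ρ)
    (hKm : ∫⁻ c, ⨆ u ∈ Metric.ball c (ρ / 2), ENNReal.ofReal (K u * ‖u‖ ^ 2) ≠ ∞)
    {X : Ω → Fin d → ℝ} {Y : Ω → ℝ} (hX : Measurable X) (hY : Measurable Y)
    {R : ℝ} (hYR : ∀ᵐ ω ∂μ, |Y ω| ≤ R)
    {r : (Fin d → ℝ) → EuclideanSpace ℝ (Fin M)} (hr : Measurable r)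
    {A : ℝ} (hrA : ∀ᵐ ω ∂μ, ‖r (X ω)‖ ≤ A)
    {L : ℝ≥0} {G : EuclideanSpace ℝ (Fin M) → ℝ} (hG : LipschitzWith L G)
    (hGCE : (fun ω => G (r (X ω))) =ᵐ[μ]
      μ[Y | MeasurableSpace.comap (fun ω => r (X ω)) inferInstance]) :
    ∃ C : ℝ, 0 < C ∧ ∀ ℓ : ℕ, 1 ≤ ℓ →
      ∫ ω : (Fin ℓ → Ω) × Ω,
          |aggEstimator K ((ℓ : ℝ) ^ (-(1 : ℝ) / ((M : ℝ) + 2))) r X Y ω.1 (X ω.2)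
              - G (r (X ω.2))| ^ 2
          ∂((Measure.pi fun _ : Fin ℓ => μ).prod μ)
        ≤ C * (ℓ : ℝ) ^ (-(2 : ℝ) / ((M : ℝ) + 2)) := by
  obtain ⟨C, hC, rate⟩ := hK.exists_lintegral_lintegral_sq_nwEstimator_smul_sub_le volume hρ hKm
    (Z := fun ω => r (X ω)) (hr.comp hX) hrA hY hYR hG hGCE
  refine ⟨C, hC, fun ℓ hℓ => ?_⟩
  set h : ℝ := (ℓ : ℝ) ^ (-(1 : ℝ) / ((M : ℝ) + 2)) with hh
  have sq_bandwidth : (ℓ : ℝ) ^ (-(2 : ℝ) / ((M : ℝ) + 2)) = h ^ 2 := by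
    rw [hh, ← Real.rpow_mul_natCast ℓ.cast_nonneg]
    ring_nf
  have measurable_estimator : Measurable fun ω : (Fin ℓ → Ω) × Ω =>
      nwEstimator K (h⁻¹ • r (X ω.2)) (fun i => h⁻¹ • r (X (ω.1 i))) (Y ∘ ω.1) :=
    hK.measurable_nwEstimator (by fun_prop) (by fun_prop) (by fun_prop)
  have hGm : Measurable G := hG.continuous.measurable
  simp only [aggEstimator_eq_nwEstimator, sq_abs, sq_bandwidth]
  exact integral_prod_le_of_lintegral_lintegral_le (by fun_prop) (fun _ => sq_nonneg _)
    (by positivity) (rate ℓ h hℓ (by rw [hh, finrank_euclideanSpace_fin]))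

/-- (Theorem 1, variance term.)  Let `K` be a regular kernel with
constants `b, ρ, κ₀` satisfying moreover the tail bound `K(z) ≤ C_K·exp(−‖z‖^α)` for
`‖z‖ ≥ R_K` (with `α, R_K, C_K > 0`).  Assume `|Y| ≤ R` a.s. and `‖r(x)‖ ≤ R` for all
`x`, and that `G` is `L`-Lipschitz with `G(r(X))` a version of `E[Y | r(X)]`.  Then,
choosing `h = ℓ^{−1/(M+2)}`, there is `C > 0` independent of `ℓ` with
`E[|g_n(r(X)) − G(r(X))|²] ≤ C·ℓ^{−2/(M+2)}` for every `ℓ ≥ 1`, the expectation being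
over both `X` and the sample `(X_i,Y_i)_{i=1}^ℓ`. -/
theorem aggEstimator_variance_rate
    {Ω : Type*} [MeasurableSpace Ω] (μ : Measure Ω) [IsProbabilityMeasure μ]
    {d M : ℕ} (hM : 0 < M)
    (K : EuclideanSpace ℝ (Fin M) → ℝ) (b ρ κ₀ : ℝ)
    (hK : IsRegularKernel K b ρ κ₀)
    (α R_K C_K : ℝ) (hα : 0 < α) (hR_K : 0 < R_K) (hC_K : 0 < C_K)
    (htail : ∀ z : EuclideanSpace ℝ (Fin M), R_K ≤ ‖z‖ →
      K z ≤ C_K * Real.exp (-‖z‖ ^ α))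
    (X : Ω → Fin d → ℝ) (Y : Ω → ℝ) (hX : Measurable X) (hY : Measurable Y)
    (hY2 : Integrable (fun ω => (Y ω) ^ 2) μ)
    (R : ℝ) (hR : 0 < R) (hYbdd : ∀ᵐ ω ∂μ, |Y ω| ≤ R)
    (r : (Fin d → ℝ) → EuclideanSpace ℝ (Fin M)) (hr : Measurable r)
    (hrBdd : ∀ x, ‖r x‖ ≤ R)
    (L : ℝ) (hL : 0 ≤ L)
    (G : EuclideanSpace ℝ (Fin M) → ℝ) (hGLip : LipschitzWith L.toNNReal G)
    (hGCE : (fun ω => G (r (X ω))) =ᵐ[μ]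
      μ[Y | MeasurableSpace.comap (fun ω => r (X ω)) inferInstance]) :
    ∃ C : ℝ, 0 < C ∧ ∀ ℓ : ℕ, 1 ≤ ℓ →
      ∫ ω : (Fin ℓ → Ω) × Ω,
          |aggEstimator K ((ℓ : ℝ) ^ (-(1 : ℝ) / ((M : ℝ) + 2))) r X Y ω.1 (X ω.2)
              - G (r (X ω.2))| ^ 2
          ∂((Measure.pi fun _ : Fin ℓ => μ).prod μ)
        ≤ C * (ℓ : ℝ) ^ (-(2 : ℝ) / ((M : ℝ) + 2)) := by
  obtain ⟨D, hD, hKD⟩ := exists_le_mul_one_add_norm_rpow_neg_of_exp_tail (p := M + 1 + (2 : ℕ))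
    hK.le_one hα hC_K.le htail (by positivity)
  exact aggEstimator_variance_rate_general μ hK.isWindowKernel hK.rho_pos
    (lintegral_iSup_ball_ofReal_ne_top volume hD (by simp)
      (mul_norm_pow_le_of_le_mul_one_add_norm_rpow hD 2 hKD) (ρ / 2))
    hX hY hYbdd hr (.of_forall fun ω => hrBdd (X ω)) hGLip hGCE
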